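/- Let S be a finite partially ordered set which is a linearly ordered space, i.e. there exists an enumeration s_1, s_2, ..., s_n of all elements of S such that for every i the initial segment ⟨s_i⟩ = {s_1, ..., s_i} is either an up-set or a down-set of (S, ⪯). Then for any N-tuple (P^1, ..., P^N) of PCA dynamics on S^{Z^d} (N ≥ 2), there exists an increasing synchronous coupling of (P^1, ..., P^N) if and only if the N-tuple is increasing; in particular, for a single PCA dynamics P, an increasing synchronous coupling of N copies of P exists if and only if P is attractive. -/

import Mathlib

/-! Every finite poset is a linearly ordered space: the initial segments of a linear extension are
down-sets. The argument is accordingly the one for general finite posets, resting on Strassen's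
theorem.

*Coupling gives monotonicity.* Both `toKernel η` and the product measure of the rules are
determined by finite cylinders, hence coincide; consequently the `i`-th marginal of the coupled
kernel is the kernel of `P i`, and integrating an increasing `f` along an almost surely ordered
tuple gives the stochastic ordering.

*Monotonicity gives a coupling.* Testing on functions of one site shows that the rules at each site
form a stochastically increasing chain of measures on `S`. The heart of the matter is then
Strassen's theorem for chains (`exists_weights`): such a chain is the family of marginals of a
probability measure on monotone tuples. The families of marginals of such measures form a compact
convex set, and a family outside it would be separated from it by functions `g i : S → ℝ`.
This contradicts `chain_bound`: if `∑ i, g i (v i) ≤ c` for every monotone `v`, then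
`∑ i, μ i (g i) ≤ c`. That bound follows by induction on the length of the chain: replace `g 0` by
its running maximum `h s = max_{t ≤ s} g 0 t`, which is increasing, so that
`μ 0 (g 0) ≤ μ 0 h ≤ μ 1 h`, and absorb `h` into `g 1`.

The coupling at a site is chosen as a function of the tuple of rules only, so locality of the coupled
rule is inherited; for unordered tuples it is the independent coupling. -/

open MeasureTheory ProbabilityTheory Filter

abbrev Site (d : ℕ) : Type := Fin d → ℤ
abbrev Config (d : ℕ) (S : Type*) : Type _ := Site d → S

/-- Stochastic ordering of measures: `ν₁ ⪯ ν₂` iff `ν₁(f) ≤ ν₂(f)` for every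
bounded measurable increasing `f`. -/
def StochLE {α : Type*} [MeasurableSpace α] [Preorder α] (μ ν : Measure α) : Prop :=
  ∀ f : α → ℝ, Measurable f → Monotone f → (∃ C, ∀ x, |f x| ≤ C) →
    ∫ x, f x ∂μ ≤ ∫ x, f x ∂ν

/-- A (local) PCA dynamics on `S^{ℤ^d}`: a Markov kernel together with its family of
local updating rules, the kernel being the product over sites of the updating rules. -/
structure PCA (d : ℕ) (S : Type*) [MeasurableSpace S] where
  rule : Site d → Config d S → Measure S
  rule_prob : ∀ k η, IsProbabilityMeasure (rule k η)
  rule_local : ∀ k : Site d, ∃ V : Finset (Site d), ∀ η η' : Config d S,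
      (∀ j ∈ V, η j = η' j) → rule k η = rule k η'
  toKernel : Kernel (Config d S) (Config d S)
  markov : IsMarkovKernel toKernel
  product : ∀ (η : Config d S) (Λ : Finset (Site d)) (y : Site d → S),
      toKernel η {σ : Config d S | ∀ k ∈ Λ, σ k = y k} = ∏ k ∈ Λ, rule k η {y k}


/-- An `N`-tuple of PCA dynamics is increasing if ordered configurations give
stochastically ordered transition measures. -/
def IncreasingTuple {d : ℕ} {S : Type*} [MeasurableSpace S] [Preorder S] {N : ℕ}
    (P : Fin N → PCA d S) : Prop :=
  ∀ ζ : Fin N → Config d S, Monotone ζ →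
    ∀ i j : Fin N, i ≤ j → StochLE ((P i).toKernel (ζ i)) ((P j).toKernel (ζ j))

/-- A PCA dynamics is attractive if it maps bounded measurable increasing functions to
increasing functions. -/
def Attractive {d : ℕ} {S : Type*} [MeasurableSpace S] [Preorder S] (P : PCA d S) : Prop :=
  ∀ f : Config d S → ℝ, Measurable f → Monotone f → (∃ C, ∀ x, |f x| ≤ C) →
    Monotone fun η => ∫ σ, f σ ∂(P.toKernel η)

/-- A synchronous coupling of the PCA dynamics `P 1, …, P N`: a PCA on the spin space
`Fin N → S` whose site marginals are the updating rules of the `P i`. -/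
structure SyncCoupling {d : ℕ} {S : Type*} [MeasurableSpace S] {N : ℕ}
    (P : Fin N → PCA d S) where
  Q : PCA d (Fin N → S)
  marginal : ∀ (k : Site d) (ζ : Fin N → Config d S) (i : Fin N),
    ((Q.rule k fun x j => ζ j x).map fun v => v i) = (P i).rule k (ζ i)

/-- A synchronous coupling is increasing when ordered configurations are a.s. mapped to
ordered configurations. -/
def SyncCoupling.Increasing {d : ℕ} {S : Type*} [MeasurableSpace S] [Preorder S] {N : ℕ}
    {P : Fin N → PCA d S} (C : SyncCoupling P) : Prop :=
  ∀ ζ : Fin N → Config d S, Monotone ζ →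
    C.Q.toKernel (fun x j => ζ j x) {ω : Config d (Fin N → S) | ∀ x, Monotone (ω x)} = 1

/-! ### Strassen's theorem for finite chains -/

/-- Weak duality for couplings on monotone chains: a bound on `∑ i, g i (v i)` over monotone
tuples `v` carries over to averages along a stochastically increasing chain of weights. -/
lemma chain_bound {S : Type*} [Fintype S] [PartialOrder S] (n : ℕ) :
    ∀ (p g : Fin (n + 1) → S → ℝ) (c : ℝ), (∀ i, ∑ s, p i s = 1) → (∀ i s, 0 ≤ p i s) →
    (∀ i : Fin n, ∀ f : S → ℝ, Monotone f →
      ∑ s, p i.castSucc s * f s ≤ ∑ s, p i.succ s * f s) →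
    (∀ v : Fin (n + 1) → S, Monotone v → ∑ i, g i (v i) ≤ c) →
    ∑ i, ∑ s, p i s * g i s ≤ c := by
  classical
  induction n with
  | zero =>
    intro p g c h1 h0 _ hc
    have hb : ∀ s, g 0 s ≤ c := fun s => by
      simpa using hc (fun _ => s) monotone_const
    calc ∑ i, ∑ s, p i s * g i s = ∑ s, p 0 s * g 0 s := by simp
      _ ≤ ∑ s, p 0 s * c :=
        Finset.sum_le_sum fun s _ => mul_le_mul_of_nonneg_left (hb s) (h0 0 s)
      _ = c := by rw [← Finset.sum_mul, h1, one_mul]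
  | succ n ih =>
    intro p g c h1 h0 hst hc
    have hne : ∀ s : S, (Finset.univ.filter (· ≤ s)).Nonempty := fun s => ⟨s, by simp⟩
    let h : S → ℝ := fun s => (Finset.univ.filter (· ≤ s)).sup' (hne s) (g 0)
    have hmono : Monotone h := fun a b hab =>
      Finset.sup'_mono _ (fun x hx => by
        simp only [Finset.mem_filter, Finset.mem_univ, true_and] at hx ⊢
        exact hx.trans hab) (hne a)
    have hge : ∀ s, g 0 s ≤ h s := fun s => Finset.le_sup' (g 0) (by simp)
    have key := ih (fun i => p i.succ) (fun i s => g i.succ s + if i = 0 then h s else 0) c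
      (fun i => h1 _) (fun i s => h0 _ s)
      (fun i f hf => by simpa using hst i.succ f hf) (by
        intro v hv
        obtain ⟨t, ht, hte⟩ := Finset.exists_mem_eq_sup' (hne (v 0)) (g 0)
        have htv : t ≤ v 0 := by simpa using ht
        have hm : Monotone (Fin.cons t v : Fin (n + 2) → S) := by
          intro i j hij
          induction i using Fin.cases with
          | zero =>
            induction j using Fin.cases with
            | zero => exact le_rfl
            | succ j => simpa using htv.trans (hv (Fin.zero_le j))
          | succ i =>
            induction j using Fin.cases with
            | zero => simp at hij
            | succ j => simpa using hv (Fin.succ_le_succ_iff.1 hij)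
        have := hc _ hm
        rw [Fin.sum_univ_succ] at this
        simp only [Fin.cons_zero, Fin.cons_succ] at this
        rw [Finset.sum_add_distrib]
        simp only [Finset.sum_ite_eq', Finset.mem_univ, if_true]
        have e : h (v 0) = g 0 t := hte
        rw [e]
        linarith)
    have e1 : ∑ i : Fin (n + 1), ∑ s, p i.succ s * (g i.succ s + if i = 0 then h s else 0)
        = ∑ i : Fin (n + 1), ∑ s, p i.succ s * g i.succ s + ∑ s, p 1 s * h s := by
      simp only [mul_add, Finset.sum_add_distrib, mul_ite, mul_zero]
      congr 1
      rw [Finset.sum_comm]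
      simp
    have e2 : ∑ s, p 0 s * g 0 s ≤ ∑ s, p 0 s * h s :=
      Finset.sum_le_sum fun s _ => mul_le_mul_of_nonneg_left (hge s) (h0 0 s)
    have e3 : ∑ s, p 0 s * h s ≤ ∑ s, p 1 s * h s := by simpa using hst 0 h hmono
    rw [Fin.sum_univ_succ]
    linarith

/-- Strassen's theorem for a stochastically increasing chain of weights on a finite poset:
it is the family of marginals of a probability vector on monotone tuples. -/
lemma exists_weights {S : Type*} [Fintype S] [DecidableEq S] [PartialOrder S] (n : ℕ)
    [Fintype {v : Fin (n + 1) → S // Monotone v}]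
    (p : Fin (n + 1) → S → ℝ) (h1 : ∀ i, ∑ s, p i s = 1) (h0 : ∀ i s, 0 ≤ p i s)
    (hst : ∀ i : Fin n, ∀ f : S → ℝ, Monotone f →
      ∑ s, p i.castSucc s * f s ≤ ∑ s, p i.succ s * f s) :
    ∃ w : {v : Fin (n + 1) → S // Monotone v} → ℝ, (∀ v, 0 ≤ w v) ∧ ∑ v, w v = 1 ∧
      ∀ i s, ∑ v, w v * (if v.1 i = s then 1 else 0) = p i s := by
  let L : ({v : Fin (n + 1) → S // Monotone v} → ℝ) →ₗ[ℝ] (Fin (n + 1) → S → ℝ) :=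
    { toFun := fun w i s => ∑ v, w v * (if v.1 i = s then 1 else 0)
      map_add' := by
        intro a b; ext i s
        simp only [Pi.add_apply, add_mul, Finset.sum_add_distrib]
      map_smul' := by intro a b; ext i s; simp [Finset.mul_sum] }
  have hL : Continuous L := L.continuous_of_finiteDimensional
  let K := L '' stdSimplex ℝ {v : Fin (n + 1) → S // Monotone v}
  have hK : IsCompact K := (isCompact_stdSimplex ℝ _).image hL
  have hKc : Convex ℝ K := (convex_stdSimplex ℝ _).linear_image L
  by_cases hp : p ∈ K
  · obtain ⟨w, hw, rfl⟩ := hp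
    exact ⟨w, hw.1, hw.2, fun i s => rfl⟩
  exfalso
  obtain ⟨f, u, hu, hpu⟩ := geometric_hahn_banach_closed_point hKc hK.isClosed hp
  let g : Fin (n + 1) → S → ℝ := fun i s => f (Pi.single i (Pi.single s 1))
  have hf : ∀ x : Fin (n + 1) → S → ℝ, f x = ∑ i, ∑ s, x i s * g i s := by
    intro x
    have hx : x = ∑ i, ∑ s, x i s • (Pi.single i (Pi.single s (1 : ℝ)) : Fin (n + 1) → S → ℝ) := by
      ext j t
      simp [Finset.sum_apply, Pi.single_apply, apply_ite, ite_apply]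
    conv_lhs => rw [hx]
    simp [map_sum, g]
  refine absurd (chain_bound n p g u h1 h0 hst fun v hv => ?_) (by rw [← hf]; exact not_le.2 hpu)
  have hmem : L (Pi.single ⟨v, hv⟩ 1) ∈ K := ⟨_, single_mem_stdSimplex ℝ _, rfl⟩
  have := hu _ hmem
  rw [hf] at this
  refine le_of_eq_of_le ?_ this.le
  have hLv : ∀ i s, L (Pi.single ⟨v, hv⟩ 1) i s = if v i = s then 1 else 0 := fun i s => by
    change ∑ x, (Pi.single ⟨v, hv⟩ 1 : {v : Fin (n + 1) → S // Monotone v} → ℝ) x * _ = _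
    rw [Finset.sum_eq_single ⟨v, hv⟩ (fun b _ hb => by simp [Pi.single_eq_of_ne hb]) (by simp)]
    simp
  simp [hLv]

/-- Chains of probability measures on a finite poset which are stochastically increasing admit a
coupling supported on monotone tuples. -/
lemma exists_monotone_coupling {S : Type*} [Fintype S] [PartialOrder S] [MeasurableSpace S]
    [MeasurableSingletonClass S] {N : ℕ} (hN : 2 ≤ N) (μ : Fin N → Measure S)
    (hμ : ∀ i, IsProbabilityMeasure (μ i)) (hst : ∀ i j, i ≤ j → StochLE (μ i) (μ j)) :
    ∃ m : Measure (Fin N → S), IsProbabilityMeasure m ∧ (∀ i, m.map (fun v => v i) = μ i) ∧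
      m {v | Monotone v} = 1 := by
  classical
  obtain ⟨n, rfl⟩ : ∃ n, N = n + 1 := ⟨N - 1, by omega⟩
  have hint : ∀ i (f : S → ℝ), ∫ s, f s ∂μ i = ∑ s, (μ i).real {s} * f s := fun i f => by
    rw [integral_fintype Integrable.of_finite]; rfl
  obtain ⟨w, w0, w1, hw⟩ := exists_weights n (fun i s => (μ i).real {s})
    (fun i => by simp)
    (fun i s => measureReal_nonneg) (fun i f hf => by
      rw [← hint, ← hint]
      refine hst _ _ (Fin.castSucc_lt_succ).le f (measurable_of_finite f) hf ?_
      obtain ⟨C, hC⟩ := (Set.finite_range fun x => |f x|).bddAbove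
      exact ⟨C, fun x => hC ⟨x, rfl⟩⟩)
  let m : Measure (Fin (n + 1) → S) := ∑ v, ENNReal.ofReal (w v) • Measure.dirac v.1
  have hm : ∀ A : Set (Fin (n + 1) → S),
      m A = ∑ v, ENNReal.ofReal (w v) * A.indicator 1 v.1 := fun A => by
    simp only [m, Measure.finsetSum_apply, Measure.smul_apply, smul_eq_mul]
    refine Finset.sum_congr rfl fun v _ => ?_
    rw [Measure.dirac_apply' _ A.toFinite.measurableSet]
  have htot : ∑ v, ENNReal.ofReal (w v) = 1 := by
    rw [← ENNReal.ofReal_sum_of_nonneg (fun v _ => w0 v), w1, ENNReal.ofReal_one]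
  refine ⟨m, ⟨by simpa [hm] using htot⟩, fun i => ?_, ?_⟩
  · refine Measure.ext_of_singleton fun s => ?_
    rw [Measure.map_apply (measurable_pi_apply i) (measurableSet_singleton s), hm,
      ← ofReal_measureReal, ← hw i s, ENNReal.ofReal_sum_of_nonneg
        (fun v _ => mul_nonneg (w0 v) (by positivity))]
    refine Finset.sum_congr rfl fun v _ => ?_
    by_cases h : v.1 i = s <;> simp [h]
  · rw [hm, ← htot]
    refine Finset.sum_congr rfl fun v _ => ?_
    simp

/-! ### The kernel is the product of the rules -/

attribute [instance] PCA.rule_prob PCA.markov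

lemma PCA.toKernel_eq {d : ℕ} {S : Type*} [Finite S] [MeasurableSpace S]
    [MeasurableSingletonClass S] (P : PCA d S) (η : Config d S) :
    P.toKernel η = Measure.infinitePi fun k => P.rule k η := by
  classical
  refine IsProjectiveLimit.unique (P := fun I : Finset (Site d) =>
    Measure.pi fun i : I => P.rule i η) (fun I => ?_) (Measure.isProjectiveLimit_infinitePi _)
  refine Measure.ext_of_singleton fun y => ?_
  rw [Measure.map_apply (Finset.measurable_restrict I) (measurableSet_singleton y),
    Measure.pi_singleton]
  -- extending `y` off `I` needs a point of `S`; `η` supplies one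
  have := P.product η I fun k => if hk : k ∈ I then y ⟨k, hk⟩ else η k
  rw [← Finset.prod_coe_sort] at this
  convert this using 2
  · ext σ
    simp only [Set.mem_preimage, Set.mem_singleton_iff, funext_iff, Finset.restrict,
      Set.mem_ofPred_eq, Subtype.forall]
    exact forall₂_congr fun k hk => by simp [hk]
  · simp

lemma PCA.map_toKernel_eval {d : ℕ} {S : Type*} [Finite S] [MeasurableSpace S]
    [MeasurableSingletonClass S] (P : PCA d S) (η : Config d S) (k : Site d) :
    (P.toKernel η).map (fun σ => σ k) = P.rule k η := by
  rw [P.toKernel_eq]; exact Measure.infinitePi_map_eval _ k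

lemma measurable_of_local {d : ℕ} {T M : Type*} [Finite T] [MeasurableSpace T]
    [MeasurableSingletonClass T] [MeasurableSpace M] (r : Config d T → M)
    (V : Finset (Site d)) (hV : ∀ η η' : Config d T, (∀ j ∈ V, η j = η' j) → r η = r η') :
    Measurable r := by
  classical
  rcases isEmpty_or_nonempty (Config d T) with h | ⟨⟨η₀⟩⟩
  · exact measurable_of_empty r
  let ext : (V → T) → Config d T := fun y k => if hk : k ∈ V then y ⟨k, hk⟩ else η₀ k
  have e : r = (fun y => r (ext y)) ∘ V.restrict := by
    funext η
    exact hV _ _ fun j hj => by simp [ext, hj]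
  rw [e]
  exact (measurable_of_finite _).comp (Finset.measurable_restrict V)

/-- The PCA dynamics determined by a family of local updating rules. Locality and finiteness of the
spin space make each rule, hence the product kernel, measurable in the configuration. -/
noncomputable def PCA.ofRule {d : ℕ} {T : Type*} [Finite T] [MeasurableSpace T]
    [MeasurableSingletonClass T] (r : Site d → Config d T → Measure T)
    (hr : ∀ k η, IsProbabilityMeasure (r k η))
    (hloc : ∀ k : Site d, ∃ V : Finset (Site d), ∀ η η' : Config d T,
      (∀ j ∈ V, η j = η' j) → r k η = r k η') : PCA d T where
  rule := r
  rule_prob := hr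
  rule_local := hloc
  toKernel :=
    { toFun := fun η => Measure.infinitePi fun k => r k η
      measurable' := by
        refine Measurable.measure_of_isPiSystem_of_isProbabilityMeasure
          (generateFrom_squareCylinders (α := fun _ : Site d => T)).symm
          (isPiSystem_squareCylinders (fun _ => MeasurableSpace.isPiSystem_measurableSet)
            (fun _ => MeasurableSet.univ)) ?_
        rintro _ ⟨s, t, ht, rfl⟩
        have hms : ∀ i ∈ s, MeasurableSet (t i) := fun i _ => ht i trivial
        simp_rw [Measure.infinitePi_pi _ hms]
        refine Finset.measurable_prod _ fun i hi => ?_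
        obtain ⟨V, hV⟩ := hloc i
        exact measurable_of_local _ V fun η η' h => by rw [hV η η' h] }
  markov := ⟨fun η => by dsimp; infer_instance⟩
  product := fun η Λ y => by
    have := Measure.infinitePi_pi (fun k => r k η) (s := Λ) (t := fun k => {y k})
      (fun i _ => measurableSet_singleton _)
    rw [← this]
    rfl

/-! ### Couplings and monotonicity -/

/-- Some coupling exists for every tuple, ordered or not; `m` is arbitrary when the `μ i` are not
probability measures, so that it can be chosen as a function of `μ` alone. -/
lemma exists_coupling {S : Type*} [Fintype S] [PartialOrder S] [MeasurableSpace S]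
    [MeasurableSingletonClass S] {N : ℕ} (hN : 2 ≤ N) (μ : Fin N → Measure S) :
    ∃ m : Measure (Fin N → S), (∀ i, IsProbabilityMeasure (μ i)) →
      IsProbabilityMeasure m ∧ (∀ i, m.map (fun v => v i) = μ i) ∧
      ((∀ i j, i ≤ j → StochLE (μ i) (μ j)) → m {v | Monotone v} = 1) := by
  by_cases hμ : ∀ i, IsProbabilityMeasure (μ i)
  · by_cases hst : ∀ i j, i ≤ j → StochLE (μ i) (μ j)
    · obtain ⟨m, h1, h2, h3⟩ := exists_monotone_coupling hN μ hμ hst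
      exact ⟨m, fun _ => ⟨h1, h2, fun _ => h3⟩⟩
    · exact ⟨Measure.pi μ, fun _ => ⟨inferInstance,
        fun i => (measurePreserving_eval μ i).map_eq, fun h => absurd h hst⟩⟩
  · exact ⟨0, fun h => absurd h hμ⟩

/-- A coupling of `μ 0, …, μ (N - 1)`, depending only on the tuple of measures, and supported on
monotone tuples as soon as the measures are stochastically increasing. -/
noncomputable def couple {S : Type*} [Fintype S] [PartialOrder S] [MeasurableSpace S]
    [MeasurableSingletonClass S] {N : ℕ} (hN : 2 ≤ N) (μ : Fin N → Measure S) :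
    Measure (Fin N → S) := (exists_coupling hN μ).choose

lemma increasingTuple_of_coupling {d : ℕ} {S : Type*} [Fintype S] [PartialOrder S]
    [MeasurableSpace S] [MeasurableSingletonClass S] {N : ℕ} {P : Fin N → PCA d S}
    (C : SyncCoupling P) (hC : C.Increasing) : IncreasingTuple P := by
  intro ζ hζ i j hij f hf hfm ⟨B, hB⟩
  have hmeas : ∀ i : Fin N, Measurable fun (ω : Config d (Fin N → S)) (x : Site d) => ω x i :=
    fun i => measurable_pi_lambda _ fun x => (measurable_pi_apply i).comp (measurable_pi_apply x)
  have hmarg : ∀ i, (P i).toKernel (ζ i) =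
      (C.Q.toKernel fun x j => ζ j x).map fun ω x => ω x i := by
    intro i
    have e := Measure.infinitePi_map_pi (X := fun _ : Site d => Fin N → S) (Y := fun _ => S)
      (fun k => C.Q.rule k fun x j => ζ j x) (f := fun _ v => v i)
      (fun _ => measurable_pi_apply i)
    rw [PCA.toKernel_eq, PCA.toKernel_eq]
    refine Eq.trans ?_ e.symm
    congr 1
    funext k
    exact (C.marginal k ζ i).symm
  have hint : ∀ i, Integrable (fun ω : Config d (Fin N → S) => f fun x => ω x i)
      (C.Q.toKernel fun x j => ζ j x) := fun i =>
    Integrable.of_bound (hf.comp (hmeas i)).aestronglyMeasurable B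
      (Eventually.of_forall fun ω => hB _)
  rw [hmarg, hmarg, integral_map (hmeas i).aemeasurable hf.aestronglyMeasurable,
    integral_map (hmeas j).aemeasurable hf.aestronglyMeasurable]
  refine integral_mono_ae (hint i) (hint j) ?_
  have hset : MeasurableSet {ω : Config d (Fin N → S) | ∀ x, Monotone (ω x)} := by
    rw [Set.ofPred_forall]
    refine MeasurableSet.iInter fun x => ?_
    have hfin := (Set.toFinite {v : Fin N → S | Monotone v}).measurableSet
    exact (measurable_pi_apply (X := fun _ : Site d => Fin N → S) x) hfin
  have hae := (mem_ae_iff_prob_eq_one hset).2 (hC ζ hζ)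
  filter_upwards [hae] with ω hω
  exact hfm fun x => hω x hij

lemma exists_coupling_of_increasingTuple {d : ℕ} {S : Type*} [Fintype S] [PartialOrder S]
    [MeasurableSpace S] [MeasurableSingletonClass S] {N : ℕ} (hN : 2 ≤ N) {P : Fin N → PCA d S}
    (hP : IncreasingTuple P) : ∃ C : SyncCoupling P, C.Increasing := by
  classical
  have spec : ∀ k (η : Config d (Fin N → S)),
      _ := fun k η => (exists_coupling hN fun i => (P i).rule k fun x => η x i).choose_spec
        (fun i => inferInstance)
  let Q : PCA d (Fin N → S) := PCA.ofRule
    (fun k η => couple hN fun i => (P i).rule k fun x => η x i) (fun k η => (spec k η).1)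
    (fun k => by
      choose V hV using fun i => (P i).rule_local k
      refine ⟨Finset.univ.biUnion V, fun η η' h => ?_⟩
      congr 1
      funext i
      exact hV i _ _ fun j hj =>
        congrFun (h j (Finset.mem_biUnion.2 ⟨i, Finset.mem_univ i, hj⟩)) i)
  refine ⟨⟨Q, fun k ζ i => (spec k _).2.1 i⟩, fun ζ hζ => ?_⟩
  have hrule : ∀ k, Q.rule k (fun x j => ζ j x) {v | Monotone v} = 1 := by
    intro k
    refine (spec k _).2.2 fun i j hij f hf hfm ⟨B, hB⟩ => ?_
    have := hP ζ hζ i j hij (fun σ => f (σ k)) (hf.comp (measurable_pi_apply k))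
      (fun σ σ' h => hfm (h k)) ⟨B, fun σ => hB _⟩
    rw [← (P i).map_toKernel_eval, ← (P j).map_toKernel_eval,
      integral_map (measurable_pi_apply k).aemeasurable hf.aestronglyMeasurable,
      integral_map (measurable_pi_apply k).aemeasurable hf.aestronglyMeasurable]
    exact this
  have hmon : MeasurableSet {v : Fin N → S | Monotone v} := (Set.toFinite _).measurableSet
  change Q.toKernel _ _ = 1
  rw [PCA.toKernel_eq]
  have := Measure.infinitePi_pi_univ (fun k => Q.rule k fun x j => ζ j x)
    (t := fun _ => {v : Fin N → S | Monotone v}) (fun _ => hmon)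
  simp only [hrule, tprod_one] at this
  rw [← this]
  congr 1
  ext ω
  simp

lemma increasingTuple_const_iff {d : ℕ} {S : Type*} [PartialOrder S] [MeasurableSpace S] {N : ℕ}
    (hN : 2 ≤ N) (P : PCA d S) : IncreasingTuple (fun _ : Fin N => P) ↔ Attractive P := by
  constructor
  · intro h f hf hfm hB η η' hη
    let ζ : Fin N → Config d S := fun i => if i.1 = 0 then η else η'
    have hζ : Monotone ζ := by
      intro i j hij
      have : i.1 ≤ j.1 := hij
      by_cases hi : i.1 = 0
      · by_cases hj : j.1 = 0
        · simp [ζ, hi, hj]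
        · simpa [ζ, hi, hj] using hη
      · have hj : j.1 ≠ 0 := by omega
        simp [ζ, hi, hj]
    have := h ζ hζ ⟨0, by omega⟩ ⟨1, by omega⟩ (by simp) f hf hfm hB
    simpa [ζ] using this
  · intro h ζ hζ i j hij f hf hfm hB
    exact h f hf hfm hB (hζ hij)

/-- For a finite partially ordered spin space which is a linearly
ordered space (there is an enumeration of `S` all of whose initial segments are up-sets
or down-sets), increasing synchronous couplings exist exactly for increasing tuples,
and for copies of a single dynamics exactly when it is attractive. -/
theorem stmt4 {d : ℕ} (hd : 1 ≤ d)
    {S : Type} [Fintype S] [PartialOrder S] [MeasurableSpace S] [MeasurableSingletonClass S]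
    (hLin : ∃ e : Fin (Fintype.card S) ≃ S, ∀ i : Fin (Fintype.card S),
      IsUpperSet {s : S | ∃ j, j ≤ i ∧ e j = s} ∨ IsLowerSet {s : S | ∃ j, j ≤ i ∧ e j = s}) :
    (∀ N : ℕ, 2 ≤ N → ∀ P : Fin N → PCA d S,
      (∃ C : SyncCoupling P, C.Increasing) ↔ IncreasingTuple P) ∧
    (∀ N : ℕ, 2 ≤ N → ∀ P : PCA d S,
      (∃ C : SyncCoupling (fun _ : Fin N => P), C.Increasing) ↔ Attractive P) := by
  exact ⟨fun N hN P => ⟨fun ⟨C, hC⟩ => increasingTuple_of_coupling C hC,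
      exists_coupling_of_increasingTuple hN⟩,
    fun N hN P => ⟨fun ⟨C, hC⟩ => (increasingTuple_const_iff hN P).1
        (increasingTuple_of_coupling C hC),
      fun h => exists_coupling_of_increasingTuple hN ((increasingTuple_const_iff hN P).2 h)⟩⟩
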